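/- Let k be an infinite field and A ≠ 0 a finitely generated k-algebra generated by x₁,…,xₙ. Then there exist elements y₁,…,y_r ∈ A, algebraically independent over k, such that A is integral over the subalgebra k[y₁,…,y_r]; moreover y₁,…,y_r can be chosen to be k-linear combinations of x₁,…,xₙ. -/

import Mathlib

open Polynomial in
/-- Substituting linear polynomials `bᵢ + cᵢ T` into a form `φ` of degree `d` yields a polynomial
in `T` of degree at most `d` whose coefficient of `T ^ d` is `φ(c)`. -/
theorem natDegree_le_and_coeff_aeval_linear_of_isHomogeneous
    {σ k R : Type*} [CommSemiring k] [CommSemiring R] [Algebra k R] (b : σ → R) (c : σ → k)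
    {φ : MvPolynomial σ k} {d : ℕ} (hφ : φ.IsHomogeneous d) :
    (MvPolynomial.aeval (fun i ↦ C (b i) + C (algebraMap k R (c i)) * X) φ).natDegree ≤ d ∧
      (MvPolynomial.aeval (fun i ↦ C (b i) + C (algebraMap k R (c i)) * X) φ).coeff d =
        algebraMap k R (MvPolynomial.eval c φ) := by
  have monomial_case (s : σ →₀ ℕ) : ∀ a : k,
      (MvPolynomial.aeval (fun i ↦ C (b i) + C (algebraMap k R (c i)) * X)
        (MvPolynomial.monomial s a)).natDegree ≤ s.degree ∧
      (MvPolynomial.aeval (fun i ↦ C (b i) + C (algebraMap k R (c i)) * X)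
        (MvPolynomial.monomial s a)).coeff s.degree =
          algebraMap k R (MvPolynomial.eval c (MvPolynomial.monomial s a)) := by
    induction s using Finsupp.induction_linear with
    | zero => simp
    | add s t hs ht =>
      intro a
      have h : MvPolynomial.monomial (s + t) a =
          MvPolynomial.monomial s a * MvPolynomial.monomial t 1 := by
        rw [MvPolynomial.monomial_mul, mul_one]
      rw [h, map_mul, map_mul, map_mul, map_add, ← (hs a).2, ← (ht 1).2]
      exact ⟨natDegree_mul_le_of_le (hs a).1 (ht 1).1,
        coeff_mul_add_eq_of_natDegree_le (hs a).1 (ht 1).1⟩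
    | single i m =>
      intro a
      have h : (C (b i) + C (algebraMap k R (c i)) * X).natDegree ≤ 1 := by
        rw [add_comm]
        exact natDegree_linear_le
      have hm := coeff_pow_of_natDegree_le h (m := m)
      have hm' := natDegree_pow_le_of_le m h
      simp only [mul_one, coeff_add, coeff_C_mul, coeff_X_one, coeff_C_succ,
        zero_add] at hm hm'
      simp only [MvPolynomial.aeval_monomial, Finsupp.prod_single_index, pow_zero,
        Finsupp.degree_single, MvPolynomial.eval_monomial, map_mul, map_pow,
        Polynomial.algebraMap_apply, coeff_C_mul, hm, and_true]
      exact (natDegree_C_mul_le _ _).trans hm'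
  have hdeg {s : σ →₀ ℕ} (hs : s ∈ φ.support) : s.degree = d := by
    by_contra h
    exact MvPolynomial.mem_support_iff.mp hs (hφ.coeff_eq_zero h)
  rw [φ.as_sum, map_sum, map_sum, map_sum, finsetSum_coeff]
  exact ⟨natDegree_sum_le_of_forall_le _ _ fun s hs ↦ hdeg hs ▸ (monomial_case s _).1,
    Finset.sum_congr rfl fun s hs ↦ hdeg hs ▸ (monomial_case s _).2⟩

/-- Integrality is transitive for subalgebras generated by integral elements. -/
theorem IsIntegral.of_adjoin {k A ι : Type*} [CommRing k] [CommRing A] [Algebra k A]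
    {x : ι → A} {S : Subalgebra k A} (hx : ∀ i, IsIntegral S (x i)) {a : A}
    (ha : IsIntegral (Algebra.adjoin k (Set.range x)) a) : IsIntegral S a := by
  have hle : Algebra.adjoin k (Set.range x) ≤ (integralClosure S A).restrictScalars k :=
    Algebra.adjoin_le (by rintro _ ⟨i, rfl⟩; exact hx i)
  have : IsIntegral (integralClosure S A) a :=
    ha.map_of_comp_eq (Subalgebra.inclusion hle).toRingHom (RingHom.id A) rfl
  exact isIntegral_trans a this

open Polynomial in
/-- Over an infinite field, if `x₀,…,xₙ` are algebraically dependent, then there are `n` linear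
combinations of them over which all of them are integral. -/
theorem exists_mem_span_isIntegral_of_not_algebraicIndependent {k A : Type*} [Field k]
    [Infinite k] [CommRing A] [Algebra k A] {n : ℕ} {x : Fin (n + 1) → A}
    (hx : ¬ AlgebraicIndependent k x) :
    ∃ y : Fin n → A, (∀ i, y i ∈ Submodule.span k (Set.range x)) ∧
      ∀ j, IsIntegral (Algebra.adjoin k (Set.range y)) (x j) := by
  obtain ⟨f, hf, hf0⟩ : ∃ f : MvPolynomial (Fin (n + 1)) k,
      MvPolynomial.aeval x f = 0 ∧ f ≠ 0 := by
    simpa [algebraicIndependent_iff] using hx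
  set d := f.totalDegree with hd
  set F := MvPolynomial.homogeneousComponent d f with hF
  have hF0 : F ≠ 0 := by
    obtain ⟨s, hs, hsd⟩ := f.support.exists_mem_eq_sup
      (MvPolynomial.support_nonempty.mpr hf0) (fun s ↦ s.degree)
    have hds : s.degree = d := by
      rw [← hsd, hd]
      simp only [MvPolynomial.totalDegree, Finsupp.degree_apply, Finsupp.sum]
    intro h
    have := congrArg (MvPolynomial.coeff s) h
    rw [hF, MvPolynomial.coeff_homogeneousComponent, if_pos hds] at this
    exact MvPolynomial.mem_support_iff.mp hs this
  obtain ⟨c, hc⟩ : ∃ c, MvPolynomial.eval c (F * MvPolynomial.X 0) ≠ 0 := by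
    by_contra! h
    exact mul_ne_zero hF0 (MvPolynomial.X_ne_zero 0) (MvPolynomial.funext (by simpa using h))
  obtain ⟨hcF, hc0⟩ : MvPolynomial.eval c F ≠ 0 ∧ c 0 ≠ 0 := by simpa using hc
  set t : A := (c 0)⁻¹ • x 0 with ht
  set y : Fin n → A := fun i ↦ x i.succ - c i.succ • t with hy
  have hxmem (j) : x j ∈ Submodule.span k (Set.range x) := Submodule.subset_span ⟨j, rfl⟩
  refine ⟨y, fun i ↦ sub_mem (hxmem _) (Submodule.smul_mem _ _ (Submodule.smul_mem _ _ (hxmem 0))),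
    ?_⟩
  set R := Algebra.adjoin k (Set.range y)
  let b : Fin (n + 1) → R := Fin.cons 0 fun i ↦ ⟨y i, Algebra.subset_adjoin ⟨i, rfl⟩⟩
  have hxb (j) : x j = b j + c j • t := by
    cases j using Fin.cases <;> simp [b, hy, ht, hc0]
  let L : MvPolynomial (Fin (n + 1)) k →ₐ[k] R[X] :=
    MvPolynomial.aeval fun i ↦ C (b i) + C (algebraMap k R (c i)) * X
  have hL (i) := natDegree_le_and_coeff_aeval_linear_of_isHomogeneous b c
    (MvPolynomial.homogeneousComponent_isHomogeneous i f)
  have hLf : L f = ∑ i ∈ Finset.range (d + 1),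
      L (MvPolynomial.homogeneousComponent i f) := by
    rw [← map_sum, MvPolynomial.sum_homogeneousComponent]
  have hdeg : (L f).natDegree ≤ d := by
    rw [hLf]
    exact natDegree_sum_le_of_forall_le _ _ fun i hi ↦
      (hL i).1.trans (Nat.lt_succ_iff.mp (Finset.mem_range.mp hi))
  have hcoeff : (L f).coeff d = algebraMap k R (MvPolynomial.eval c F) := by
    rw [hLf, finsetSum_coeff, Finset.sum_range_succ, Finset.sum_eq_zero, zero_add]
    · exact (hL d).2
    · exact fun i hi ↦ coeff_eq_zero_of_natDegree_lt
        ((hL i).1.trans_lt (Finset.mem_range.mp hi))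
  have hroot : aeval t (L f) = 0 := by
    rw [← hf]
    have : ((aeval t : R[X] →ₐ[R] A).restrictScalars k).comp L = MvPolynomial.aeval x := by
      ext j
      simp [L, hxb, Algebra.smul_def]
    exact DFunLike.congr_fun this f
  have htint : IsIntegral R t := by
    refine ⟨C (algebraMap k R (MvPolynomial.eval c F)⁻¹) * L f, ?_, ?_⟩
    · refine monic_of_natDegree_le_of_coeff_eq_one d ((natDegree_C_mul_le _ _).trans hdeg) ?_
      rw [coeff_C_mul, hcoeff, ← map_mul, inv_mul_cancel₀ hcF, map_one]
    · rw [← aeval_def, map_mul, hroot, mul_zero]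
  intro j
  rw [hxb]
  exact isIntegral_algebraMap.add (htint.smul (c j))

/-- Over an infinite field, every finite family is integral over the subalgebra generated by some
algebraically independent linear combinations of it. -/
theorem exists_algebraicIndependent_mem_span_isIntegral {k A : Type*} [Field k] [Infinite k]
    [CommRing A] [Nontrivial A] [Algebra k A] {n : ℕ} (x : Fin n → A) :
    ∃ (r : ℕ) (y : Fin r → A), AlgebraicIndependent k y ∧
      (∀ i, y i ∈ Submodule.span k (Set.range x)) ∧
      ∀ j, IsIntegral (Algebra.adjoin k (Set.range y)) (x j) := by
  have base {m : ℕ} (x : Fin m → A) (j : Fin m) :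
      IsIntegral (Algebra.adjoin k (Set.range x)) (x j) :=
    isIntegral_algebraMap (x := (⟨x j, Algebra.subset_adjoin ⟨j, rfl⟩⟩ :
      Algebra.adjoin k (Set.range x)))
  induction n with
  | zero =>
    exact ⟨0, x, algebraicIndependent_empty_type, nofun, nofun⟩
  | succ n ih =>
    by_cases hx : AlgebraicIndependent k x
    · exact ⟨n + 1, x, hx, fun i ↦ Submodule.subset_span ⟨i, rfl⟩, base x⟩
    obtain ⟨z, hz, hxz⟩ := exists_mem_span_isIntegral_of_not_algebraicIndependent hx
    obtain ⟨r, y, hy, hyz, hzy⟩ := ih z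
    exact ⟨r, y, hy, fun i ↦ Submodule.span_le.mpr (Set.range_subset_iff.mpr hz) (hyz i),
      fun j ↦ .of_adjoin hzy (hxz j)⟩

/-- Noether's normalization lemma over an infinite field, with the
normalizing elements chosen to be linear combinations of the given generators:
if `A ≠ 0` is a `k`-algebra generated by `x₁,…,xₙ`, there are `y₁,…,y_r ∈ A`
algebraically independent over `k`, each a `k`-linear combination of the `x j`,
such that `A` is integral over `k[y₁,…,y_r]`. -/
theorem noether_normalization_linear {k A : Type*} [Field k] [Infinite k]
    [CommRing A] [Nontrivial A] [Algebra k A]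
    {n : ℕ} (x : Fin n → A)
    (hx : Algebra.adjoin k (Set.range x) = ⊤) :
    ∃ (r : ℕ) (y : Fin r → A),
      AlgebraicIndependent k y ∧
      (∀ a : A, IsIntegral (Algebra.adjoin k (Set.range y)) a) ∧
      (∀ i : Fin r, ∃ c : Fin n → k, y i = ∑ j, c j • x j) := by
  obtain ⟨r, y, hy, hyx, hxy⟩ := exists_algebraicIndependent_mem_span_isIntegral (k := k) x
  refine ⟨r, y, hy, fun a ↦ ?_, fun i ↦ ?_⟩
  · have ha : a ∈ Algebra.adjoin k (Set.range x) := hx ▸ Algebra.mem_top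
    exact .of_adjoin hxy (isIntegral_algebraMap (x := (⟨a, ha⟩ : Algebra.adjoin k (Set.range x))))
  · obtain ⟨c, hc⟩ := (Submodule.mem_span_range_iff_exists_fun k).mp (hyx i)
    exact ⟨c, hc.symm⟩
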